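/- arXiv:1302.3921 — 3 statements merged into one kernel-verified Lean document; each statement's English description precedes it below -/
import Mathlib

section
/- Let f_c ≥ 10 be an integer, λ_c = 1/f_c, and let T ⊂ 𝕋 be a finite set with minimum separation Δ(T) ≥ 2/f_c. Let t ∈ 𝕋 and let t_a, t_b be the two elements of T nearest to t. Then Σ_{t_k ∈ T \ {t_a, t_b}} |K(t − t_k)| ≤ 1.083. -/
open Finset

noncomputable section

/-- Wraparound (circle) distance between two real representatives of points on
the circle `𝕋 = ℝ/ℤ`. -/
def cdist (s t : ℝ) : ℝ := ‖((s - t : ℝ) : AddCircle (1 : ℝ))‖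

/-- `Δ(T) ≥ d`: the minimum separation condition for the finite set `T ⊂ 𝕋`. -/
def HasMinSep (T : Finset ℝ) (d : ℝ) : Prop :=
  ∀ s ∈ T, ∀ t ∈ T, s ≠ t → d ≤ cdist s t

/-- The 1-periodic interpolation kernel
`K(t) = [sin((f_c/2 + 1) π t) / ((f_c/2 + 1) sin (π t))]^4`, with `K = 1` at
the integers (in particular `K 0 = 1`). -/
def Kker (fc : ℕ) (t : ℝ) : ℝ :=
  if Real.sin (Real.pi * t) = 0 then 1
  else (Real.sin (((fc : ℝ) / 2 + 1) * Real.pi * t) /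
        (((fc : ℝ) / 2 + 1) * Real.sin (Real.pi * t))) ^ 4

/-- `K^{(ℓ)}`, the `ℓ`-th derivative of the kernel `K`. -/
def Kd (fc : ℕ) (ℓ : ℕ) : ℝ → ℝ := iteratedDeriv ℓ (Kker fc)

/-- `(α, β)` solves the interpolation linear system
`[[D₀, D₁], [D₁, D₂]] (α; β) = (e_{t_j}; 0)`, i.e. for every `t_l ∈ T`,
`∑_{t_k ∈ T} (α_k K(t_l - t_k) + β_k K'(t_l - t_k)) = 1_{t_l = t_j}` and
`∑_{t_k ∈ T} (α_k K'(t_l - t_k) + β_k K''(t_l - t_k)) = 0`. -/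
def SolvesSystem (fc : ℕ) (T : Finset ℝ) (tj : ℝ) (α β : ℝ → ℝ) : Prop :=
  (∀ tl ∈ T,
      (∑ tk ∈ T, (α tk * Kker fc (tl - tk) + β tk * Kd fc 1 (tl - tk))) =
        if tl = tj then 1 else 0) ∧
  (∀ tl ∈ T,
      (∑ tk ∈ T, (α tk * Kd fc 1 (tl - tk) + β tk * Kd fc 2 (tl - tk))) = 0)

/-- The interpolating polynomial
`q_{t_j}(t) = ∑_{t_k ∈ T} (α_k K(t - t_k) + β_k K^{(1)}(t - t_k))`. -/
def qInterp (fc : ℕ) (T : Finset ℝ) (α β : ℝ → ℝ) (t : ℝ) : ℝ :=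
  ∑ tk ∈ T, (α tk * Kker fc (t - tk) + β tk * Kd fc 1 (t - tk))

/-!
Write `d` for the separation. Seen from `t`, every point of `T` has a signed representative in
`[-1/2, 1/2]`, and these real numbers are pairwise at least `d` apart. Among the two nearest points
and any third one, two lie on the same side of `t`, so the third is at distance at least `d` from
`t`. Hence the distances to the remaining points on each side dominate `d, 2d, 3d, …` term by term.
Since `|K(x)| ≤ ((f_c + 2) |x|)⁻⁴` for `0 < |x| ≤ 1/2`, each side contributes at most
`ζ(4) / ((f_c + 2) d)⁴`.
-/

section OrderedGroup

variable {α : Type*} [AddCommGroup α] [LinearOrder α] [IsOrderedAddMonoid α] {x y z d r : α}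

lemma abs_sub_le_of_nonneg_iff_nonneg (hxy : 0 ≤ x ↔ 0 ≤ y) (hx : |x| ≤ r) (hy : |y| ≤ r) :
    |x - y| ≤ r := by
  rw [abs_le] at hx hy
  by_cases h : 0 ≤ x
  · exact abs_sub_le_of_nonneg_of_le h hx.2 (hxy.mp h) hy.2
  · have hx_neg : 0 ≤ -x := (neg_pos.mpr (not_le.mp h)).le
    have hy_neg : 0 ≤ -y := (neg_pos.mpr (not_le.mp (mt hxy.mpr h))).le
    rw [abs_sub_comm, ← neg_sub_neg]
    exact abs_sub_le_of_nonneg_of_le hx_neg (neg_le.mp hx.1) hy_neg (neg_le.mp hy.1)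

lemma le_abs_of_pairwise_le_abs_sub (hxy : d ≤ |x - y|) (hxz : d ≤ |x - z|) (hyz : d ≤ |y - z|)
    (hy : |y| ≤ |x|) (hz : |z| ≤ |x|) : d ≤ |x| := by
  have same_side : (0 ≤ x ↔ 0 ≤ y) ∨ (0 ≤ x ↔ 0 ≤ z) ∨ (0 ≤ y ↔ 0 ≤ z) := by tauto
  rcases same_side with h | h | h
  · exact hxy.trans (abs_sub_le_of_nonneg_iff_nonneg h le_rfl hy)
  · exact hxz.trans (abs_sub_le_of_nonneg_iff_nonneg h le_rfl hz)
  · exact hyz.trans (abs_sub_le_of_nonneg_iff_nonneg h hy hz)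

end OrderedGroup

section SeparatedSums

variable {ι : Type*} {S : Finset ι} {u : ι → ℝ} {f : ℝ → ℝ} {d z : ℝ}

lemma injOn_floor_div_of_separated (hd : 0 < d) (hu : ∀ i ∈ S, 0 ≤ u i)
    (hsep : ∀ i ∈ S, ∀ j ∈ S, i ≠ j → d ≤ |u i - u j|) :
    Set.InjOn (fun i ↦ ⌊u i / d⌋₊) S := by
  intro i hi j hj hij
  by_contra hne
  have floor_eq : ⌊u i / d⌋ = ⌊u j / d⌋ := by
    rw [← Int.natCast_floor_eq_floor (div_nonneg (hu i hi) hd.le),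
      ← Int.natCast_floor_eq_floor (div_nonneg (hu j hj) hd.le)]
    exact congrArg _ hij
  have hlt := Int.abs_sub_lt_one_of_floor_eq_floor floor_eq
  rw [← sub_div, abs_div, abs_of_pos hd, div_lt_one hd] at hlt
  exact (hsep i hi j hj hne).not_gt hlt

lemma sum_le_hasSum_of_separated (hd : 0 < d) (hf : AntitoneOn f (Set.Ici d))
    (hf_nonneg : ∀ n : ℕ, 0 ≤ f (n * d)) (hz : HasSum (fun n : ℕ ↦ f (n * d)) z)
    (hfar : ∀ i ∈ S, d ≤ u i) (hsep : ∀ i ∈ S, ∀ j ∈ S, i ≠ j → d ≤ |u i - u j|) :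
    ∑ i ∈ S, f (u i) ≤ z := by
  have hu : ∀ i ∈ S, 0 ≤ u i := fun i hi ↦ hd.le.trans (hfar i hi)
  have term_le : ∀ i ∈ S, f (u i) ≤ f (⌊u i / d⌋₊ * d) := by
    intro i hi
    have one_le : 1 ≤ ⌊u i / d⌋₊ := Nat.le_floor <| by
      rw [Nat.cast_one]
      exact (one_le_div hd).mpr (hfar i hi)
    have floor_mul_le : ⌊u i / d⌋₊ * d ≤ u i :=
      (le_div_iff₀ hd).mp (Nat.floor_le (div_nonneg (hu i hi) hd.le))
    exact hf (le_mul_of_one_le_left hd.le (mod_cast one_le)) (hfar i hi) floor_mul_le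
  calc ∑ i ∈ S, f (u i) ≤ ∑ i ∈ S, f (⌊u i / d⌋₊ * d) := sum_le_sum term_le
    _ = ∑ n ∈ S.image (fun i ↦ ⌊u i / d⌋₊), f (n * d) :=
      (sum_image (f := fun n : ℕ ↦ f (n * d)) (injOn_floor_div_of_separated hd hu hsep)).symm
    _ ≤ z := sum_le_hasSum _ (fun n _ ↦ hf_nonneg n) hz

lemma sum_abs_le_hasSum_add_of_separated (hd : 0 < d) (hf : AntitoneOn f (Set.Ici d))
    (hf_nonneg : ∀ n : ℕ, 0 ≤ f (n * d)) (hz : HasSum (fun n : ℕ ↦ f (n * d)) z)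
    (hfar : ∀ i ∈ S, d ≤ |u i|) (hsep : ∀ i ∈ S, ∀ j ∈ S, i ≠ j → d ≤ |u i - u j|) :
    ∑ i ∈ S, f |u i| ≤ z + z := by
  rw [← sum_filter_add_sum_filter_not S (fun i ↦ 0 ≤ u i)]
  refine add_le_add
    (sum_le_hasSum_of_separated hd hf hf_nonneg hz (fun i hi ↦ hfar i (mem_of_mem_filter i hi)) ?_)
    (sum_le_hasSum_of_separated hd hf hf_nonneg hz (fun i hi ↦ hfar i (mem_of_mem_filter i hi)) ?_)
  all_goals
    intro i hi j hj hij
    rw [mem_filter] at hi hj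
  · rw [abs_of_nonneg hi.2, abs_of_nonneg hj.2]
    exact hsep i hi.1 j hj.1 hij
  · rw [abs_of_neg (not_le.mp hi.2), abs_of_neg (not_le.mp hj.2), neg_sub_neg, abs_sub_comm]
    exact hsep i hi.1 j hj.1 hij

end SeparatedSums

lemma hasSum_inv_mul_pow_four (c : ℝ) :
    HasSum (fun n : ℕ ↦ (((n : ℝ) * c) ^ 4)⁻¹) (Real.pi ^ 4 / (90 * c ^ 4)) := by
  simpa only [mul_pow, mul_inv, one_div, div_mul_eq_mul_div, ← div_eq_mul_inv, div_div] using
    hasSum_zeta_four.mul_right (c ^ 4)⁻¹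

/-- The representative of `x` modulo `1` of smallest absolute value. It turns the wraparound
distance on the circle into an absolute value on `ℝ` while keeping track of the side on which `x`
lies. -/
def signedRep (x : ℝ) : ℝ := x - round x

lemma cdist_eq_abs_signedRep (s t : ℝ) : cdist s t = |signedRep (s - t)| := by
  rw [cdist, AddCircle.norm_eq, inv_one, one_mul, mul_one, signedRep]

lemma cdist_le_abs_signedRep_sub_signedRep (t s s' : ℝ) :
    cdist s s' ≤ |signedRep (t - s) - signedRep (t - s')| := by
  rw [cdist_eq_abs_signedRep, abs_sub_comm (signedRep (t - s))]
  calc |signedRep (s - s')| ≤ |s - s' - (round (t - s') - round (t - s) : ℤ)| := round_le _ _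
    _ = |signedRep (t - s') - signedRep (t - s)| := by
      simp only [signedRep, Int.cast_sub]
      ring_nf

lemma abs_sin_pi_mul_signedRep (x : ℝ) :
    |Real.sin (Real.pi * signedRep x)| = |Real.sin (Real.pi * x)| := by
  rw [signedRep, mul_sub, mul_comm Real.pi (round x : ℝ), Real.sin_sub_int_mul_pi, abs_mul,
    abs_zpow, abs_neg, abs_one, one_zpow, one_mul]

lemma two_mul_abs_signedRep_le_abs_sin (x : ℝ) :
    2 * |signedRep x| ≤ |Real.sin (Real.pi * x)| := by
  have abs_le_half_pi : |Real.pi * signedRep x| ≤ Real.pi / 2 := by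
    rw [abs_mul, abs_of_pos Real.pi_pos, div_eq_mul_one_div]
    exact mul_le_mul_of_nonneg_left (abs_sub_round x) Real.pi_pos.le
  calc 2 * |signedRep x| = 2 / Real.pi * |Real.pi * signedRep x| := by
        rw [abs_mul, abs_of_pos Real.pi_pos]
        field_simp
    _ ≤ |Real.sin (Real.pi * signedRep x)| := Real.mul_abs_le_abs_sin abs_le_half_pi
    _ = |Real.sin (Real.pi * x)| := abs_sin_pi_mul_signedRep x

lemma abs_Kker_le (fc : ℕ) {x : ℝ} (hx : signedRep x ≠ 0) :
    |Kker fc x| ≤ ((|signedRep x| * (fc + 2)) ^ 4)⁻¹ := by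
  have hr : 0 < |signedRep x| := abs_pos.mpr hx
  have hsin := two_mul_abs_signedRep_le_abs_sin x
  have sin_ne_zero : Real.sin (Real.pi * x) ≠ 0 := abs_pos.mp (by linarith)
  have denominator_le :
      |signedRep x| * (fc + 2) ≤ |((fc : ℝ) / 2 + 1) * Real.sin (Real.pi * x)| := by
    rw [abs_mul, abs_of_pos (by positivity : (0 : ℝ) < fc / 2 + 1)]
    calc |signedRep x| * (fc + 2) = ((fc : ℝ) / 2 + 1) * (2 * |signedRep x|) := by ring
      _ ≤ ((fc : ℝ) / 2 + 1) * |Real.sin (Real.pi * x)| := by gcongr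
  rw [Kker, if_neg sin_ne_zero, abs_pow, abs_div, ← inv_pow, ← one_div]
  gcongr
  exact Real.abs_sin_le_one _

lemma HasMinSep.le_abs_signedRep_sub_signedRep {T : Finset ℝ} {d : ℝ} (hsep : HasMinSep T d)
    (t : ℝ) : ∀ s ∈ T, ∀ s' ∈ T, s ≠ s' → d ≤ |signedRep (t - s) - signedRep (t - s')| :=
  fun s hs s' hs' hne ↦
    (hsep s hs s' hs' hne).trans (cdist_le_abs_signedRep_sub_signedRep t s s')

lemma HasMinSep.le_abs_signedRep_of_cdist_le {T : Finset ℝ} {d t s a b : ℝ}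
    (hsep : HasMinSep T d) (hs : s ∈ T) (ha : a ∈ T) (hb : b ∈ T) (hsa : s ≠ a) (hsb : s ≠ b)
    (hab : a ≠ b) (hle_a : cdist t a ≤ cdist t s) (hle_b : cdist t b ≤ cdist t s) :
    d ≤ |signedRep (t - s)| := by
  have rep_sep := hsep.le_abs_signedRep_sub_signedRep t
  rw [cdist_eq_abs_signedRep, cdist_eq_abs_signedRep] at hle_a hle_b
  exact le_abs_of_pairwise_le_abs_sub (rep_sep s hs a ha hsa) (rep_sep s hs b hb hsb)
    (rep_sep a ha b hb hab) hle_a hle_b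

theorem kernel_tail_sum_general (fc : ℕ) {T : Finset ℝ} {d : ℝ} (hd : 0 < d) (hsep : HasMinSep T d)
    {t ta tb : ℝ} (hta : ta ∈ T) (htb : tb ∈ T) (hab : ta ≠ tb)
    (hnearest : ∀ s ∈ T, s ≠ ta → s ≠ tb → cdist t ta ≤ cdist t s ∧ cdist t tb ≤ cdist t s) :
    ∑ tk ∈ (T.erase ta).erase tb, |Kker fc (t - tk)| ≤
      Real.pi ^ 4 / (45 * (d * (fc + 2)) ^ 4) := by
  have mem_T : ∀ s ∈ (T.erase ta).erase tb, s ∈ T := fun s hs ↦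
    mem_of_mem_erase (mem_of_mem_erase hs)
  have far : ∀ s ∈ (T.erase ta).erase tb, d ≤ |signedRep (t - s)| := by
    intro s hs
    obtain ⟨hsb, hsa, hsT⟩ : s ≠ tb ∧ s ≠ ta ∧ s ∈ T := by simpa only [mem_erase] using hs
    obtain ⟨hle_a, hle_b⟩ := hnearest s hsT hsa hsb
    exact hsep.le_abs_signedRep_of_cdist_le hsT hta htb hsa hsb hab hle_a hle_b
  have antitone : AntitoneOn (fun x : ℝ ↦ ((x * (fc + 2)) ^ 4)⁻¹) (Set.Ici d) := by
    intro x hx y _ hxy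
    have : 0 < x := hd.trans_le hx
    dsimp only
    gcongr
  have hasSum : HasSum (fun n : ℕ ↦ ((n * d * ((fc : ℝ) + 2)) ^ 4)⁻¹)
      (Real.pi ^ 4 / (90 * (d * (fc + 2)) ^ 4)) := by
    simpa only [mul_assoc] using hasSum_inv_mul_pow_four (d * ((fc : ℝ) + 2))
  calc ∑ tk ∈ (T.erase ta).erase tb, |Kker fc (t - tk)|
      ≤ ∑ tk ∈ (T.erase ta).erase tb, ((|signedRep (t - tk)| * (fc + 2)) ^ 4)⁻¹ :=
        sum_le_sum fun s hs ↦ abs_Kker_le fc (abs_pos.mp (hd.trans_le (far s hs)))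
    _ ≤ Real.pi ^ 4 / (90 * (d * (fc + 2)) ^ 4) + Real.pi ^ 4 / (90 * (d * (fc + 2)) ^ 4) :=
        sum_abs_le_hasSum_add_of_separated hd antitone (fun n ↦ by positivity) hasSum far
          fun s hs s' hs' ↦ hsep.le_abs_signedRep_sub_signedRep t s (mem_T s hs) s' (mem_T s' hs')
    _ = Real.pi ^ 4 / (45 * (d * (fc + 2)) ^ 4) := by
        field_simp
        norm_num

lemma pi_pow_four_div_le {r : ℝ} (hr : 2 ≤ r) : Real.pi ^ 4 / (45 * r ^ 4) ≤ 1.083 :=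
  calc Real.pi ^ 4 / (45 * r ^ 4) ≤ 4 ^ 4 / (45 * 2 ^ 4) := by
        gcongr
        exact Real.pi_le_four
    _ ≤ 1.083 := by norm_num

/-- if `Δ(T) ≥ 2/f_c` and `t_a, t_b` are the two elements of `T` nearest
to `t`, then `∑_{t_k ∈ T \ {t_a, t_b}} |K(t - t_k)| ≤ 1.083`. -/
theorem kernel_tail_sum
    (fc : ℕ) (hfc : 10 ≤ fc)
    (T : Finset ℝ) (hT : ↑T ⊆ Set.Ico (0 : ℝ) 1)
    (hsep : HasMinSep T (2 * (1 / (fc : ℝ))))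
    (t ta tb : ℝ) (hta : ta ∈ T) (htb : tb ∈ T) (hab : ta ≠ tb)
    (hnearest : ∀ s ∈ T, s ≠ ta → s ≠ tb →
      cdist t ta ≤ cdist t s ∧ cdist t tb ≤ cdist t s) :
    ∑ tk ∈ (T.erase ta).erase tb, |Kker fc (t - tk)| ≤ 1.083 := by
  have fc_pos : (0 : ℝ) < fc := Nat.cast_pos.mpr (by lia)
  have two_le : 2 ≤ 2 * (1 / (fc : ℝ)) * (fc + 2) := by
    field_simp
    linarith
  exact (kernel_tail_sum_general fc (by positivity) hsep hta htb hab hnearest).trans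
    (pi_pow_four_div_le two_le)
end
end

section
/- Let f_c ≥ 10 be an integer, λ_c = 1/f_c, and let T ⊂ 𝕋 be a finite set with minimum separation Δ(T) ≥ 2/f_c. Let t ∈ 𝕋 and let t_a, t_b be the two elements of T nearest to t. Then Σ_{t_k ∈ T \ {t_a, t_b}} |K^{(1)}(t − t_k)| ≤ 1.75 f_c. -/
open Finset

noncomputable section

/-!
On `|u| ≤ 1/2` the inequality `|sin (π u)| ≥ 2 |u|` turns the derivative of the fourth power of the
normalized Dirichlet kernel into the decay bound `|K⁽¹⁾(u)| ≤ 3π / (f_c³ |u|⁴)` as soon as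
`f_c |u| ≥ 2`. Three points of the line that are pairwise `d`-separated cannot all lie in `(-d, d)`,
so every point of `T` other than the two nearest ones is at distance at least `d = 2/f_c` from `t`.
On either side of `t` the distances to the remaining points, divided by `d`, then have distinct
integer parts `≥ 1`, and the sum of their inverse fourth powers is at most `ζ(4) = π⁴/90`.
-/

section KernelTail

open Real

section SeparatedSums

variable {ι : Type*} {S : Finset ι} {x : ι → ℝ}

lemma injOn_floor_of_separated (hx : ∀ i ∈ S, 0 ≤ x i)
    (hsep : (S : Set ι).Pairwise fun i j => 1 ≤ |x i - x j|) :
    Set.InjOn (fun i => ⌊x i⌋₊) S := by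
  intro i hi j hj (hij : ⌊x i⌋₊ = ⌊x j⌋₊)
  by_contra hne
  refine (hsep hi hj hne).not_gt (abs_sub_lt_iff.2 ?_)
  have hi_le := Nat.floor_le (hx i hi)
  have hj_le := Nat.floor_le (hx j hj)
  have hi_lt := Nat.lt_floor_add_one (x i)
  have hj_lt := Nat.lt_floor_add_one (x j)
  rw [hij] at hi_le hi_lt
  constructor <;> linarith

variable {f : ℝ → ℝ} {Z : ℝ}

lemma sum_le_of_antitoneOn_of_separated (hf : AntitoneOn f (Set.Ici 1))
    (hf_nonneg : ∀ n : ℕ, 0 ≤ f n) (hZ : HasSum (fun n : ℕ => f n) Z)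
    (hx : ∀ i ∈ S, 1 ≤ x i) (hsep : (S : Set ι).Pairwise fun i j => 1 ≤ |x i - x j|) :
    ∑ i ∈ S, f (x i) ≤ Z := by
  have hx_nonneg : ∀ i ∈ S, 0 ≤ x i := fun i hi => zero_le_one.trans (hx i hi)
  calc ∑ i ∈ S, f (x i) ≤ ∑ i ∈ S, f ⌊x i⌋₊ := by
        refine sum_le_sum fun i hi => hf ?_ (hx i hi) (Nat.floor_le (hx_nonneg i hi))
        exact Set.mem_Ici.2 (Nat.one_le_cast.2 ((Nat.one_le_floor_iff _).2 (hx i hi)))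
    _ = ∑ n ∈ S.image (fun i => ⌊x i⌋₊), f n :=
        (sum_image (f := fun n : ℕ => f n) (injOn_floor_of_separated hx_nonneg hsep)).symm
    _ ≤ Z := sum_le_hasSum _ (fun n _ => hf_nonneg n) hZ

lemma sum_abs_le_of_antitoneOn_of_separated (hf : AntitoneOn f (Set.Ici 1))
    (hf_nonneg : ∀ n : ℕ, 0 ≤ f n) (hZ : HasSum (fun n : ℕ => f n) Z)
    (hx : ∀ i ∈ S, 1 ≤ |x i|) (hsep : (S : Set ι).Pairwise fun i j => 1 ≤ |x i - x j|) :
    ∑ i ∈ S, f |x i| ≤ 2 * Z := by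
  have half_le (P : ι → Prop) [DecidablePred P]
      (hP : ∀ i, P i → ∀ j, P j → |(|x i| - |x j|)| = |x i - x j|) :
      ∑ i ∈ S with P i, f |x i| ≤ Z := by
    refine sum_le_of_antitoneOn_of_separated hf hf_nonneg hZ
      (fun i hi => hx i (mem_filter.1 hi).1) fun i hi j hj hij => ?_
    obtain ⟨hiS, hiP⟩ := mem_filter.1 hi
    obtain ⟨hjS, hjP⟩ := mem_filter.1 hj
    exact (hsep hiS hjS hij).trans_eq (hP i hiP j hjP).symm
  have nonneg_le : ∑ i ∈ S with 0 ≤ x i, f |x i| ≤ Z :=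
    half_le _ fun i hi j hj => by rw [abs_of_nonneg hi, abs_of_nonneg hj]
  have neg_le : ∑ i ∈ S with ¬0 ≤ x i, f |x i| ≤ Z := by
    refine half_le _ fun i hi j hj => ?_
    rw [abs_of_neg (not_le.1 hi), abs_of_neg (not_le.1 hj), neg_sub_neg, abs_sub_comm]
  rw [← sum_filter_add_sum_filter_not S (fun i => 0 ≤ x i)]
  linarith

-- For `k ≠ 0` the term of `hZ` at `n = 0` is `1 / 0 = 0`, so `Z` is `ζ(k)`.
lemma sum_one_div_abs_pow_le_of_separated {k : ℕ} {d : ℝ} (hd : 0 < d)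
    (hZ : HasSum (fun n : ℕ => 1 / (n : ℝ) ^ k) Z) (hx : ∀ i ∈ S, d ≤ |x i|)
    (hsep : (S : Set ι).Pairwise fun i j => d ≤ |x i - x j|) :
    ∑ i ∈ S, 1 / |x i| ^ k ≤ 2 * Z / d ^ k := by
  have hanti : AntitoneOn (fun y : ℝ => 1 / y ^ k) (Set.Ici 1) := fun a ha b _ hab => by
    have : 0 < a := zero_lt_one.trans_le ha
    dsimp only
    gcongr
  have hscaled : ∑ i ∈ S, 1 / |x i / d| ^ k ≤ 2 * Z := by
    refine sum_abs_le_of_antitoneOn_of_separated hanti (fun n => by positivity) hZ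
      (fun i hi => ?_) fun i hi j hj hij => ?_
    · rw [abs_div, abs_of_pos hd, one_le_div hd]
      exact hx i hi
    · dsimp only
      rw [← sub_div, abs_div, abs_of_pos hd, one_le_div hd]
      exact hsep hi hj hij
  rw [le_div_iff₀ (by positivity), sum_mul]
  refine le_trans (sum_le_sum fun i _ => ?_) hscaled
  rw [abs_div, abs_of_pos hd, div_pow, one_div_div, one_div_mul_eq_div]

end SeparatedSums

section CircleDisplacement

/-- The signed displacement on the circle from `s` to `t`: the representative of `t - s` modulo `1`
of smallest absolute value. It places the points of `T` on a line with `t` at the origin. -/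
def circleDisp (t s : ℝ) : ℝ := t - s - round (t - s)

lemma abs_circleDisp (t s : ℝ) : |circleDisp t s| = cdist t s :=
  UnitAddCircle.norm_eq.symm

lemma cdist_le_abs_circleDisp_sub (t s s' : ℝ) :
    cdist s s' ≤ |circleDisp t s - circleDisp t s'| := by
  calc cdist s s' = |s - s' - round (s - s')| := UnitAddCircle.norm_eq
    _ ≤ |s - s' - (round (t - s') - round (t - s) : ℤ)| := round_le _ _
    _ = |circleDisp t s - circleDisp t s'| := by
        rw [← abs_neg, circleDisp, circleDisp]
        push_cast
        ring_nf

lemma le_abs_of_separated {d x y z : ℝ} (hxy : d ≤ |x - y|) (hxz : d ≤ |x - z|)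
    (hyz : d ≤ |y - z|) (hx : |x| ≤ |z|) (hy : |y| ≤ |z|) : d ≤ |z| := by
  by_contra! hz
  obtain ⟨hx₁, hx₂⟩ := abs_lt.1 (hx.trans_lt hz)
  obtain ⟨hy₁, hy₂⟩ := abs_lt.1 (hy.trans_lt hz)
  obtain ⟨hz₁, hz₂⟩ := abs_lt.1 hz
  rcases le_abs.1 hxy with hxy | hxy <;> rcases le_abs.1 hxz with hxz | hxz <;>
    rcases le_abs.1 hyz with hyz | hyz <;> linarith

lemma HasMinSep.le_cdist_of_nearest {T : Finset ℝ} {d t ta tb s : ℝ} (hsep : HasMinSep T d)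
    (hta : ta ∈ T) (htb : tb ∈ T) (hs : s ∈ T) (hab : ta ≠ tb) (hsa : s ≠ ta) (hsb : s ≠ tb)
    (ha : cdist t ta ≤ cdist t s) (hb : cdist t tb ≤ cdist t s) : d ≤ cdist t s := by
  have hdisp {p q : ℝ} (hp : p ∈ T) (hq : q ∈ T) (hpq : p ≠ q) :
      d ≤ |circleDisp t p - circleDisp t q| :=
    (hsep p hp q hq hpq).trans (cdist_le_abs_circleDisp_sub t p q)
  simp only [← abs_circleDisp] at ha hb ⊢
  exact le_abs_of_separated (hdisp hta htb hab) (hdisp hta hs hsa.symm) (hdisp htb hs hsb.symm)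
    ha hb

lemma HasMinSep.sum_one_div_cdist_pow_le {T : Finset ℝ} {d t Z : ℝ} {k : ℕ} (hsep : HasMinSep T d)
    (hd : 0 < d) (hZ : HasSum (fun n : ℕ => 1 / (n : ℝ) ^ k) Z) (hfar : ∀ s ∈ T, d ≤ cdist t s) :
    ∑ s ∈ T, 1 / cdist t s ^ k ≤ 2 * Z / d ^ k := by
  simp only [← abs_circleDisp] at hfar ⊢
  exact sum_one_div_abs_pow_le_of_separated hd hZ hfar fun p hp q hq hpq =>
    (hsep p hp q hq hpq).trans (cdist_le_abs_circleDisp_sub t p q)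

lemma two_mul_norm_le_abs_sin_pi_mul (u : ℝ) : 2 * ‖(u : UnitAddCircle)‖ ≤ |sin (π * u)| := by
  have hπu : |π * (u - round u)| = π * |u - round u| := by rw [abs_mul, abs_of_pos pi_pos]
  have hle : |π * (u - round u)| ≤ π / 2 := by
    rw [hπu]
    linarith [mul_le_mul_of_nonneg_left (abs_sub_round u) pi_pos.le]
  calc 2 * ‖(u : UnitAddCircle)‖ = 2 / π * |π * (u - round u)| := by
        rw [UnitAddCircle.norm_eq, hπu, ← mul_assoc, div_mul_cancel₀ _ pi_ne_zero]
    _ ≤ |sin (π * (u - round u))| := mul_abs_le_abs_sin hle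
    _ = |sin (π * u)| := by
        rw [mul_sub, mul_comm π (round u : ℝ), sin_sub_int_mul_pi, abs_mul, abs_neg_one_zpow,
          one_mul]

end CircleDisplacement

section Kernel

/-- The normalized Dirichlet kernel `sin (N π t) / (N sin (π t))`, whose fourth power for
`N = f_c / 2 + 1` is `Kker` off the integers. The order `N` is real because `f_c` may be odd; at
integers `t` the value is `0` by the convention for division, not the limit. -/
def dirichletRatio (N t : ℝ) : ℝ := sin (N * π * t) / (N * sin (π * t))

variable {N u : ℝ}

lemma abs_dirichletRatio_le (hN : 0 < N) (u : ℝ) :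
    |dirichletRatio N u| ≤ 1 / (N * |sin (π * u)|) := by
  rw [dirichletRatio, abs_div, abs_mul, abs_of_pos hN]
  gcongr
  exact abs_sin_le_one _

lemma hasDerivAt_dirichletRatio (hN : N ≠ 0) (hu : sin (π * u) ≠ 0) :
    HasDerivAt (dirichletRatio N)
      (π / sin (π * u) * (cos (N * π * u) - cos (π * u) * dirichletRatio N u)) u := by
  have hnum : HasDerivAt (fun t => sin (N * π * t)) (cos (N * π * u) * (N * π * 1)) u :=
    ((hasDerivAt_id u).const_mul (N * π)).sin
  have hden : HasDerivAt (fun t => N * sin (π * t)) (N * (cos (π * u) * (π * 1))) u :=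
    ((hasDerivAt_id u).const_mul π).sin.const_mul N
  refine (hnum.fun_div hden (mul_ne_zero hN hu)).congr_deriv ?_
  rw [dirichletRatio]
  field_simp

lemma abs_deriv_dirichletRatio_le (hN : 0 < N) (hu : sin (π * u) ≠ 0) :
    |deriv (dirichletRatio N) u| ≤ π / |sin (π * u)| * (1 + 1 / (N * |sin (π * u)|)) := by
  rw [(hasDerivAt_dirichletRatio hN.ne' hu).deriv, abs_mul, abs_div, abs_of_pos pi_pos]
  gcongr
  calc |cos (N * π * u) - cos (π * u) * dirichletRatio N u|
      ≤ |cos (N * π * u)| + |cos (π * u)| * |dirichletRatio N u| :=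
        (abs_sub _ _).trans_eq (by rw [abs_mul])
    _ ≤ 1 + 1 * (1 / (N * |sin (π * u)|)) := by
        gcongr
        exacts [abs_cos_le_one _, abs_cos_le_one _, abs_dirichletRatio_le hN u]
    _ = 1 + 1 / (N * |sin (π * u)|) := by rw [one_mul]

lemma abs_deriv_dirichletRatio_pow_le (hN : 0 < N) (hu : sin (π * u) ≠ 0) (k : ℕ) :
    |deriv (fun t => dirichletRatio N t ^ k) u| ≤
      k * (1 / (N * |sin (π * u)|)) ^ (k - 1) *
        (π / |sin (π * u)| * (1 + 1 / (N * |sin (π * u)|))) := by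
  rw [deriv_fun_pow (hasDerivAt_dirichletRatio hN.ne' hu).differentiableAt, abs_mul, abs_mul,
    Nat.abs_cast, abs_pow]
  gcongr
  exacts [abs_dirichletRatio_le hN u, abs_deriv_dirichletRatio_le hN hu]

lemma Kker_eventuallyEq (fc : ℕ) (hu : sin (π * u) ≠ 0) :
    Kker fc =ᶠ[nhds u] fun t => dirichletRatio (fc / 2 + 1) t ^ 4 := by
  have hcont : ContinuousAt (fun t => sin (π * t)) u := by fun_prop
  filter_upwards [hcont.eventually_ne hu] with t ht
  exact if_neg ht

lemma abs_Kd_one_le {fc : ℕ} (hfc : 0 < fc) (hu : 2 / fc ≤ ‖(u : UnitAddCircle)‖) :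
    |Kd fc 1 u| ≤ 3 * π / fc ^ 3 * (1 / ‖(u : UnitAddCircle)‖ ^ 4) := by
  set δ := ‖(u : UnitAddCircle)‖
  have hfc' : (0 : ℝ) < fc := Nat.cast_pos.2 hfc
  have hδ : 0 < δ := (by positivity : (0 : ℝ) < 2 / fc).trans_le hu
  have hsin : 2 * δ ≤ |sin (π * u)| := two_mul_norm_le_abs_sin_pi_mul u
  have hsin_ne : sin (π * u) ≠ 0 := abs_pos.1 ((by positivity : 0 < 2 * δ).trans_le hsin)
  have hNsin : fc * δ ≤ (fc / 2 + 1) * |sin (π * u)| :=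
    calc fc * δ = fc / 2 * (2 * δ) := by ring
      _ ≤ (fc / 2 + 1) * |sin (π * u)| := by gcongr; linarith
  have hfcδ : 2 ≤ fc * δ := (div_le_iff₀' hfc').1 hu
  rw [Kd, iteratedDeriv_one, (Kker_eventuallyEq fc hsin_ne).deriv_eq]
  calc |deriv (fun t => dirichletRatio (fc / 2 + 1) t ^ 4) u|
      ≤ (4 : ℕ) * (1 / ((fc / 2 + 1) * |sin (π * u)|)) ^ 3 *
          (π / |sin (π * u)| * (1 + 1 / ((fc / 2 + 1) * |sin (π * u)|))) :=
        abs_deriv_dirichletRatio_pow_le (by positivity) hsin_ne 4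
    _ ≤ 4 * (1 / (fc * δ)) ^ 3 * (π / (2 * δ) * (1 + 1 / (fc * δ))) := by
        push_cast
        gcongr
    _ ≤ 4 * (1 / (fc * δ)) ^ 3 * (π / (2 * δ) * (1 + 1 / 2)) := by gcongr
    _ = 3 * π / fc ^ 3 * (1 / δ ^ 4) := by
        field_simp
        norm_num

end Kernel

theorem kernel_deriv_tail_sum_general {fc : ℕ} (hfc : 0 < fc) {T : Finset ℝ}
    (hsep : HasMinSep T (2 / fc)) {t ta tb : ℝ} (hta : ta ∈ T) (htb : tb ∈ T) (hab : ta ≠ tb)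
    (hnearest : ∀ s ∈ T, s ≠ ta → s ≠ tb → cdist t ta ≤ cdist t s ∧ cdist t tb ≤ cdist t s) :
    ∑ s ∈ (T.erase ta).erase tb, |Kd fc 1 (t - s)| ≤ π ^ 5 / 240 * fc := by
  set S := (T.erase ta).erase tb with hS
  have hST : S ⊆ T := (erase_subset _ _).trans (erase_subset _ _)
  have hsepS : HasMinSep S (2 / fc) := fun p hp q hq => hsep p (hST hp) q (hST hq)
  have hfar : ∀ s ∈ S, 2 / (fc : ℝ) ≤ cdist t s := fun s hs => by
    obtain ⟨hsb, hsa, hsT⟩ : s ≠ tb ∧ s ≠ ta ∧ s ∈ T := by simpa only [hS, mem_erase] using hs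
    obtain ⟨ha, hb⟩ := hnearest s hsT hsa hsb
    exact hsep.le_cdist_of_nearest hta htb hsT hab hsa hsb ha hb
  calc ∑ s ∈ S, |Kd fc 1 (t - s)| ≤ ∑ s ∈ S, 3 * π / fc ^ 3 * (1 / cdist t s ^ 4) :=
        sum_le_sum fun s hs => abs_Kd_one_le hfc (hfar s hs)
    _ = 3 * π / fc ^ 3 * ∑ s ∈ S, 1 / cdist t s ^ 4 := (mul_sum ..).symm
    _ ≤ 3 * π / fc ^ 3 * (2 * (π ^ 4 / 90) / (2 / fc) ^ 4) := by
        gcongr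
        exact hsepS.sum_one_div_cdist_pow_le (by positivity) hasSum_zeta_four hfar
    _ = π ^ 5 / 240 * fc := by
        field_simp
        norm_num

lemma pi_pow_five_div_le : π ^ 5 / 240 ≤ 1.75 := by
  have : π ^ 5 ≤ 3.15 ^ 5 := by gcongr; exact pi_lt_d2.le
  norm_num at this ⊢
  linarith

end KernelTail

/-- if `Δ(T) ≥ 2/f_c` and `t_a, t_b` are the two elements of `T` nearest
to `t`, then `∑_{t_k ∈ T \ {t_a, t_b}} |K^{(1)}(t - t_k)| ≤ 1.75 f_c`. -/
theorem kernel_deriv_tail_sum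
    (fc : ℕ) (hfc : 10 ≤ fc)
    (T : Finset ℝ) (hT : ↑T ⊆ Set.Ico (0 : ℝ) 1)
    (hsep : HasMinSep T (2 * (1 / (fc : ℝ))))
    (t ta tb : ℝ) (hta : ta ∈ T) (htb : tb ∈ T) (hab : ta ≠ tb)
    (hnearest : ∀ s ∈ T, s ≠ ta → s ≠ tb →
      cdist t ta ≤ cdist t s ∧ cdist t tb ≤ cdist t s) :
    ∑ tk ∈ (T.erase ta).erase tb, |Kd fc 1 (t - tk)| ≤ 1.75 * (fc : ℝ) :=
  (kernel_deriv_tail_sum_general (by lia) (by rwa [← mul_one_div]) hta htb hab hnearest).trans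
    (mul_le_mul_of_nonneg_right pi_pow_five_div_le (Nat.cast_nonneg fc))
end
end

section
/- Let f_c ≥ 10 be an integer, n = 2f_c+1, λ_c = 1/f_c, c = 0.1649, and suppose Δ(T) ≥ 2λ_c. Let C_a, C_b be the constants of the dual-polynomial lemma (so that for v_j = conj(a_j)/|a_j| there is a low-pass polynomial q of cut-off f_c with q(t_j) = v_j on T, |q(t)| < 1 − C_a when |t − t_j| > cλ_c for all t_j ∈ T, and |q(t)| ≤ 1 − C_b (t − t_j)²/λ_c² when |t − t_j| ≤ cλ_c). Then for this q and any solution x̂ = Σ_k â_k δ_{t̂_k} of the total-variation minimization program: ∫_𝕋 q(t) x̂(dt) ≥ ‖x̂‖_TV − 2δ. -/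
open Finset

noncomputable section

/-- The complex exponential `e^{i 2 π k t}`. -/
def efun (k : ℤ) (t : ℝ) : ℂ :=
  Complex.exp (2 * (Real.pi : ℂ) * Complex.I * (k : ℂ) * (t : ℂ))

/-- The measurement map `F_n`: the `k`-th Fourier coefficient
`∫ e^{-i 2 π k t} μ(dt)` of the finite atomic complex measure `μ = ∑_{t ∈ S} a t δ_t`. -/
def Fmeas (fc : ℕ) (S : Finset ℝ) (a : ℝ → ℂ) (k : ℤ) : ℂ :=
  ∑ t ∈ S, a t * efun (-k) t

/-- The `ℓ₂` norm of a vector in `ℂ^n`, `n = 2 f_c + 1`, indexed by `k ∈ {-f_c, …, f_c}`. -/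
def l2norm (fc : ℕ) (v : ℤ → ℂ) : ℝ :=
  Real.sqrt (∑ k ∈ Finset.Icc (-(fc : ℤ)) (fc : ℤ), ‖v k‖ ^ 2)

/-- Total-variation norm of the finite atomic complex measure `∑_{t ∈ S} a t δ_t`. -/
def tvnorm (S : Finset ℝ) (a : ℝ → ℂ) : ℝ := ∑ t ∈ S, ‖a t‖

/-- Feasibility for the data constraint: `‖F_n x̃ - y‖₂ ≤ δ`. -/
def Feasible (fc : ℕ) (δ : ℝ) (y : ℤ → ℂ) (S : Finset ℝ) (a : ℝ → ℂ) : Prop :=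
  l2norm fc (fun k => Fmeas fc S a k - y k) ≤ δ

/-- `∑_{t ∈ Sh} ah t δ_t` is a solution of the TV-norm minimization program:
it is supported on `[0,1)`, feasible, and its TV norm is at most that of any
feasible finite (atomic) complex measure supported on `[0,1)`. -/
def IsSolution (fc : ℕ) (δ : ℝ) (y : ℤ → ℂ) (Sh : Finset ℝ) (ah : ℝ → ℂ) : Prop :=
  ↑Sh ⊆ Set.Ico (0 : ℝ) 1 ∧ Feasible fc δ y Sh ah ∧
    ∀ (S' : Finset ℝ) (a' : ℝ → ℂ), ↑S' ⊆ Set.Ico (0 : ℝ) 1 →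
      Feasible fc δ y S' a' → tvnorm Sh ah ≤ tvnorm S' a'

/-- The trigonometric (low-pass) polynomial `t ↦ ∑_{k=-f_c}^{f_c} b_k e^{i 2 π k t}`. -/
def trigPoly (fc : ℕ) (b : ℤ → ℂ) (t : ℝ) : ℂ :=
  ∑ k ∈ Finset.Icc (-(fc : ℤ)) (fc : ℤ), b k * efun k t

/-!
By Parseval, a trigonometric polynomial `q` with `‖q‖_∞ ≤ 1` has a coefficient vector `d` with
`‖d‖₂ = ‖q‖_{L²} ≤ ‖q‖_∞ ≤ 1`, as `𝕋` has mass one. Since `∫ q dμ` is the pairing of `d` with the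
Fourier data of `μ`, Cauchy–Schwarz shows that the integrals of `q` against two feasible measures
both lie within `δ` of the pairing of `d` with `y`. Hence `∫ q dx̂` is within `2δ` of
`∫ q dx = ‖x‖_TV ≥ ‖x̂‖_TV`.
-/

lemma sum_sq_norm_le_sq_norm_sum_fourier {P : ℝ} [Fact (0 < P)] (s : Finset ℤ) (d : ℤ → ℂ) :
    ∑ k ∈ s, ‖d k‖ ^ 2 ≤ ‖∑ k ∈ s, d k • (fourier k : C(AddCircle P, ℂ))‖ ^ 2 := by
  set f : C(AddCircle P, ℂ) := ∑ k ∈ s, d k • fourier k with hf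
  let toL2 := ContinuousMap.toLp (E := ℂ) 2 (AddCircle.haarAddCircle (T := P)) ℂ
  have toL2_f : toL2 f = ∑ k ∈ s, d k • fourierLp 2 k := by
    simp only [hf, map_sum, map_smul]
    rfl
  have parseval : ‖toL2 f‖ ^ 2 = ∑ k ∈ s, ‖d k‖ ^ 2 := by
    rw [toL2_f, @norm_sq_eq_re_inner ℂ, orthonormal_fourier.inner_sum, map_sum]
    refine sum_congr rfl fun k _ => ?_
    rw [Complex.conj_mul']
    norm_cast
  have norm_toL2_le : ‖toL2‖ ≤ 1 := by
    simpa [MeasureTheory.measureUnivNNReal] using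
      ContinuousMap.toLp_norm_le (E := ℂ) (𝕜 := ℂ) (p := 2)
        (μ := AddCircle.haarAddCircle (T := P))
  rw [← parseval]
  gcongr
  exact (toL2.le_of_opNorm_le norm_toL2_le f).trans_eq (one_mul _)

lemma efun_eq_fourier (k : ℤ) (t : ℝ) : efun k t = fourier k (t : AddCircle (1 : ℝ)) := by
  simp [efun]

lemma l2norm_le_one_of_norm_trigPoly_le_one {fc : ℕ} {d : ℤ → ℂ}
    (hd : ∀ t, ‖trigPoly fc d t‖ ≤ 1) : l2norm fc d ≤ 1 := by
  let q : C(AddCircle (1 : ℝ), ℂ) := ∑ k ∈ Icc (-(fc : ℤ)) fc, d k • fourier k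
  have q_coe (t : ℝ) : q t = trigPoly fc d t := by
    simp [q, trigPoly, efun_eq_fourier, ContinuousMap.sum_apply]
  have norm_q_le : ‖q‖ ≤ 1 :=
    (ContinuousMap.norm_le _ zero_le_one).2 <| QuotientAddGroup.mk_surjective.forall.2 fun t =>
      (congrArg norm (q_coe t)).trans_le (hd t)
  exact Real.sqrt_le_one.2 <|
    (sum_sq_norm_le_sq_norm_sum_fourier _ d).trans (pow_le_one₀ (norm_nonneg _) norm_q_le)

section Pairing

variable {fc : ℕ}

lemma l2norm_nonneg (v : ℤ → ℂ) : 0 ≤ l2norm fc v :=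
  Real.sqrt_nonneg _

lemma l2norm_comp_neg (v : ℤ → ℂ) : l2norm fc (fun k => v (-k)) = l2norm fc v :=
  congrArg Real.sqrt <| sum_equiv (Equiv.neg ℤ) (fun k => by
    simp only [mem_Icc, Equiv.neg_apply]; omega) fun _ _ => rfl

lemma norm_sum_mul_le_l2norm_mul_l2norm (v w : ℤ → ℂ) :
    ‖∑ k ∈ Icc (-(fc : ℤ)) fc, v k * w k‖ ≤ l2norm fc v * l2norm fc w :=
  calc ‖∑ k ∈ Icc (-(fc : ℤ)) fc, v k * w k‖
      ≤ ∑ k ∈ Icc (-(fc : ℤ)) fc, ‖v k‖ * ‖w k‖ := by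
        simpa only [norm_mul] using norm_sum_le (Icc (-(fc : ℤ)) fc) fun k => v k * w k
    _ ≤ l2norm fc v * l2norm fc w := Real.sum_mul_le_sqrt_mul_sqrt _ _ _

lemma sum_mul_trigPoly_eq_sum_mul_Fmeas (d : ℤ → ℂ) (S : Finset ℝ) (a : ℝ → ℂ) :
    ∑ t ∈ S, a t * trigPoly fc d t = ∑ k ∈ Icc (-(fc : ℤ)) fc, d k * Fmeas fc S a (-k) := by
  simp only [trigPoly, Fmeas, mul_sum, neg_neg]
  rw [sum_comm]
  simp only [mul_left_comm]

lemma Feasible.norm_sum_mul_trigPoly_sub_le {δ : ℝ} {y : ℤ → ℂ} {S : Finset ℝ} {a : ℝ → ℂ}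
    (ha : Feasible fc δ y S a) {d : ℤ → ℂ} (hd : l2norm fc d ≤ 1) :
    ‖∑ t ∈ S, a t * trigPoly fc d t - ∑ k ∈ Icc (-(fc : ℤ)) fc, d k * y (-k)‖ ≤ δ := by
  set residual : ℤ → ℂ := fun k => Fmeas fc S a k - y k with residual_def
  calc ‖∑ t ∈ S, a t * trigPoly fc d t - ∑ k ∈ Icc (-(fc : ℤ)) fc, d k * y (-k)‖
      = ‖∑ k ∈ Icc (-(fc : ℤ)) fc, d k * residual (-k)‖ := by
        simp only [sum_mul_trigPoly_eq_sum_mul_Fmeas, residual_def, mul_sub, sum_sub_distrib]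
    _ ≤ l2norm fc d * l2norm fc residual :=
        (norm_sum_mul_le_l2norm_mul_l2norm d _).trans_eq (by rw [l2norm_comp_neg])
    _ ≤ l2norm fc residual := mul_le_of_le_one_left (l2norm_nonneg _) hd
    _ ≤ δ := ha

lemma feasible_Fmeas_add {δ : ℝ} {z : ℤ → ℂ} (hz : l2norm fc z ≤ δ) (S : Finset ℝ) (a : ℝ → ℂ) :
    Feasible fc δ (fun k => Fmeas fc S a k + z k) S a := by
  simpa [Feasible, l2norm] using hz

end Pairing

lemma sum_mul_eq_tvnorm_of_eq_conj_div_norm {S : Finset ℝ} {a q : ℝ → ℂ}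
    (ha : ∀ t ∈ S, a t ≠ 0) (hq : ∀ t ∈ S, q t = (starRingEnd ℂ) (a t) / (‖a t‖ : ℂ)) :
    ∑ t ∈ S, a t * q t = tvnorm S a := by
  rw [tvnorm, Complex.ofReal_sum]
  refine sum_congr rfl fun t ht => ?_
  have norm_ne_zero : (‖a t‖ : ℂ) ≠ 0 := by simpa using ha t ht
  rw [hq t ht, ← mul_div_assoc, Complex.mul_conj', sq, mul_div_cancel_right₀ _ norm_ne_zero]

lemma norm_le_one_of_far_of_near {E : Type*} [Norm E] {q : ℝ → E} {T : Finset ℝ}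
    {r l Ca Cb : ℝ} (hCa : 0 ≤ Ca) (hCb : 0 ≤ Cb)
    (hfar : ∀ t, (∀ s ∈ T, r < cdist t s) → ‖q t‖ ≤ 1 - Ca)
    (hnear : ∀ t, ∀ s ∈ T, cdist t s ≤ r → ‖q t‖ ≤ 1 - Cb * cdist t s ^ 2 / l ^ 2) (t : ℝ) :
    ‖q t‖ ≤ 1 := by
  by_cases ht : ∀ s ∈ T, r < cdist t s
  · exact (hfar t ht).trans (sub_le_self 1 hCa)
  · push Not at ht
    obtain ⟨s, hs, hts⟩ := ht
    exact (hnear t s hs hts).trans (sub_le_self 1 (by positivity))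

theorem dual_polynomial_integral_lower_bound_general {fc : ℕ} {δ : ℝ} {y : ℤ → ℂ}
    {T Sh : Finset ℝ} {a ah : ℝ → ℂ} {d : ℤ → ℂ}
    (hx : Feasible fc δ y T a) (hxh : Feasible fc δ y Sh ah) (htv : tvnorm Sh ah ≤ tvnorm T a)
    (hd : l2norm fc d ≤ 1) (hdual : ∑ t ∈ T, a t * trigPoly fc d t = tvnorm T a) :
    (∑ t ∈ Sh, ah t * trigPoly fc d t).re ≥ tvnorm Sh ah - 2 * δ := by
  let pairing : ℂ := ∑ k ∈ Icc (-(fc : ℤ)) fc, d k * y (-k)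
  have integrals_close :
      dist (∑ t ∈ T, a t * trigPoly fc d t) (∑ t ∈ Sh, ah t * trigPoly fc d t) ≤ δ + δ :=
    (dist_triangle_right _ _ pairing).trans <| add_le_add
      ((dist_eq_norm _ _).trans_le (hx.norm_sum_mul_trigPoly_sub_le hd))
      ((dist_eq_norm _ _).trans_le (hxh.norm_sum_mul_trigPoly_sub_le hd))
  rw [hdual, dist_eq_norm] at integrals_close
  have re_close := (Complex.re_le_norm _).trans integrals_close
  rw [Complex.sub_re, Complex.ofReal_re] at re_close
  linarith

/-- let `q` be a dual polynomial with the properties of Lemma 2.3 for the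
sign pattern `v_j = conj(a_j)/|a_j|` (constants `C_a, C_b`, `0 < c² C_b ≤ C_a < 1`). Then
for any solution `x̂ = ∑ ah_k δ_{th_k}` of the TV minimization program,
`∫_𝕋 q dx̂ ≥ ‖x̂‖_TV - 2δ`. -/
theorem dual_polynomial_integral_lower_bound
    (fc : ℕ) (hfc : 10 ≤ fc)
    (T : Finset ℝ) (hT : ↑T ⊆ Set.Ico (0 : ℝ) 1)
    (hsep : HasMinSep T (2 * (1 / (fc : ℝ))))
    (a : ℝ → ℂ) (ha : ∀ t ∈ T, a t ≠ 0)
    (z : ℤ → ℂ) (δ : ℝ) (hδ : 0 ≤ δ) (hz : l2norm fc z ≤ δ)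
    (Ca Cb : ℝ) (hCb : 0 < (0.1649 : ℝ) ^ 2 * Cb)
    (hCab : (0.1649 : ℝ) ^ 2 * Cb ≤ Ca) (hCa : Ca < 1)
    (d : ℤ → ℂ)
    (hinterp : ∀ t_j ∈ T,
      trigPoly fc d t_j = (starRingEnd ℂ) (a t_j) / (‖a t_j‖ : ℂ))
    (hfar : ∀ t : ℝ, (∀ t_j ∈ T, 0.1649 * (1 / (fc : ℝ)) < cdist t t_j) →
      ‖trigPoly fc d t‖ < 1 - Ca)
    (hnear : ∀ t : ℝ, ∀ t_j ∈ T, cdist t t_j ≤ 0.1649 * (1 / (fc : ℝ)) →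
      ‖trigPoly fc d t‖ ≤ 1 - Cb * (cdist t t_j) ^ 2 / (1 / (fc : ℝ)) ^ 2)
    (Sh : Finset ℝ) (ah : ℝ → ℂ)
    (hsol : IsSolution fc δ (fun k => Fmeas fc T a k + z k) Sh ah) :
    (∑ t ∈ Sh, ah t * trigPoly fc d t).re ≥ tvnorm Sh ah - 2 * δ := by
  have hCb_pos : 0 < Cb := pos_of_mul_pos_right hCb (by positivity)
  have norm_le_one := norm_le_one_of_far_of_near (hCb.le.trans hCab) hCb_pos.le
    (fun t ht => (hfar t ht).le) hnear
  have hx := feasible_Fmeas_add hz T a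
  exact dual_polynomial_integral_lower_bound_general hx hsol.2.1 (hsol.2.2 T a hT hx)
    (l2norm_le_one_of_norm_trigPoly_le_one norm_le_one)
    (sum_mul_eq_tvnorm_of_eq_conj_div_norm ha hinterp)
end
end
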